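/- arXiv:2106.12293 — 2 statements merged into one kernel-verified Lean document; each statement's English description precedes it below -/
import Mathlib

section
/- Let p ≥ 1 and suppose G is p-edge-outconnected from s, i.e., for every t ≠ s there exist p pairwise edge-disjoint paths from s to t in G. Then there exists a set H ⊆ E such that: no edge of H enters s; every vertex t ≠ s has exactly p edges of H entering it (so |H| = p(n−1)); and for every t ≠ s there exists a family of p pairwise edge-disjoint paths from s to t, all of whose edges belong to H, whose total cost is minimum among all families of p pairwise edge-disjoint paths from s to t in G. -/
open scoped Classical

namespace MultipathPreserver

variable {V : Type*}

/-- `IsPath F u v L`: `L` is a list of pairwise-distinct directed edges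
`e_1, …, e_k` with `e_j = (x_{j-1}, x_j)`, `x_0 = u`, `x_k = v`, all edges
belonging to the edge set `F`. The empty list is a path from `u` to `u`. -/
def IsPath (F : Set (V × V)) (u v : V) (L : List (V × V)) : Prop :=
  L.Nodup ∧ (∀ e ∈ L, e ∈ F) ∧ List.Chain' (fun e f => e.2 = f.1) L ∧
  (∀ e ∈ L.head?, e.1 = u) ∧ (∀ e ∈ L.getLast?, e.2 = v) ∧ (L = [] → u = v)

/-- The cost of a path (sum of edge costs w.r.t. the cost function `w`). -/
def pathCost (w : V × V → ℝ) (L : List (V × V)) : ℝ := (L.map w).sum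

/-- A family of `k` pairwise edge-disjoint paths from `u` to `v` in the graph
with edge set `F`. -/
def IsDisjointFamily (F : Set (V × V)) (u v : V) {k : ℕ}
    (P : Fin k → List (V × V)) : Prop :=
  (∀ j, IsPath F u v (P j)) ∧ ∀ j j' : Fin k, j ≠ j' → ∀ e ∈ P j, e ∉ P j'

/-- The total cost of a family of paths. -/
def famCost (w : V × V → ℝ) {k : ℕ} (P : Fin k → List (V × V)) : ℝ :=
  ∑ j, pathCost w (P j)

/-- A family of `k` pairwise edge-disjoint paths from `u` to `v` whose total
cost is minimum among all such families. -/
def IsMinFamily (F : Set (V × V)) (w : V × V → ℝ) (u v : V) {k : ℕ}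
    (P : Fin k → List (V × V)) : Prop :=
  IsDisjointFamily F u v P ∧
  ∀ Q : Fin k → List (V × V), IsDisjointFamily F u v Q → famCost w P ≤ famCost w Q

/-- `S` induces `k` edge-disjoint paths of minimum total cost from `u` to `v`
in the graph with edge set `F` and costs `w`: `S` is exactly the set of edges
used by some minimum-total-cost family of `k` pairwise edge-disjoint paths. -/
def Induces (F : Set (V × V)) (w : V × V → ℝ) (u v : V) (k : ℕ)
    (S : Set (V × V)) : Prop :=
  ∃ P : Fin k → List (V × V), IsMinFamily F w u v P ∧ S = {e | ∃ j, e ∈ P j}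

/-- As `Induces`, but additionally the paths of the family are simple
(their vertices `u, (P j)_1.2, …` are pairwise distinct). -/
def InducesSimple (F : Set (V × V)) (w : V × V → ℝ) (u v : V) (k : ℕ)
    (S : Set (V × V)) : Prop :=
  ∃ P : Fin k → List (V × V), IsMinFamily F w u v P ∧
    (∀ j, (u :: (P j).map Prod.snd).Nodup) ∧ S = {e | ∃ j, e ∈ P j}

/-- Edge set of the residual network `G_S`: edges of `E \ S` together with the
reversals of the edges of `S`. -/
def resEdges (E S : Set (V × V)) : Set (V × V) :=
  (E \ S) ∪ {e | (e.2, e.1) ∈ S}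

/-- Cost function of the residual network `G_S`: a reversed edge `(v,u)` with
`(u,v) ∈ S` costs `-c (u,v)`; any other edge keeps its cost. -/
noncomputable def resCost (c : V × V → ℝ) (S : Set (V × V)) (e : V × V) : ℝ :=
  if (e.2, e.1) ∈ S then -c (e.2, e.1) else c e

/-- `η(L)`: the number of edges of `L` belonging to `E \ H`. -/
noncomputable def eta (E H : Set (V × V)) (L : List (V × V)) : ℕ :=
  L.countP (fun e => decide (e ∈ E ∧ e ∉ H))

/-- The measure `|π| = (c_S(π), η(π))` of a path, compared lexicographically. -/
noncomputable def pmeasure (w : V × V → ℝ) (E H : Set (V × V))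
    (L : List (V × V)) : ℝ × ℕ :=
  (pathCost w L, eta E H L)

/-- Strict lexicographic order on measures. -/
def lexLt (a b : ℝ × ℕ) : Prop := a.1 < b.1 ∨ (a.1 = b.1 ∧ a.2 < b.2)

/-- Lexicographic order on measures. -/
def lexLe (a b : ℝ × ℕ) : Prop := a.1 < b.1 ∨ (a.1 = b.1 ∧ a.2 ≤ b.2)

/-- `Π(u,v; G_S)`: the paths from `u` to `v` in the residual network `G_S`
that are minimal w.r.t. the lexicographic order `≼` on `|·| = (c_S(·), η(·))`. -/
def PiMin (E H : Set (V × V)) (c : V × V → ℝ) (S : Set (V × V)) (u v : V) :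
    Set (List (V × V)) :=
  {L | IsPath (resEdges E S) u v L ∧
    ∀ L', IsPath (resEdges E S) u v L' →
      lexLe (pmeasure (resCost c S) E H L) (pmeasure (resCost c S) E H L')}

/-- The number of edges of the prefix `π[s : q(π)]` of a path `π`:
one more than the index of the last edge of `π`, other than the final edge,
belonging to `E \ H`; `0` if no such edge exists. -/
noncomputable def qPrefixLen (E H : Set (V × V)) (L : List (V × V)) : ℕ :=
  L.dropLast.length -
    List.findIdx (fun e => decide (e ∈ E ∧ e ∉ H)) L.dropLast.reverse

/-- `q(π)`: the last internal vertex of `π` whose incoming edge along `π`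
belongs to `E \ H`, and `s` if no such vertex exists.  The prefix `π[s:q(π)]`
is `L.take (qPrefixLen E H L)` and the suffix `π[q(π):t]` is
`L.drop (qPrefixLen E H L)`. -/
noncomputable def qVert (E H : Set (V × V)) (s : V) (L : List (V × V)) : V :=
  ((L.take (qPrefixLen E H L)).getLast?).elim s Prod.snd

/-- `λ(t)`: the maximum number of pairwise edge-disjoint paths from `s` to `t`
in the graph with edge set `E`. -/
noncomputable def lambda (E : Set (V × V)) (s t : V) : ℕ :=
  sSup {k : ℕ | ∃ P : Fin k → List (V × V), IsDisjointFamily E s t P}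

/-!
Perturb the costs lexicographically so that distinct arc sets have distinct total weights, and let
`S t` be the unique minimum-weight integral flow of value `p` from `s` to `t`. Put an arc `e` into
`H` when `e ∈ S (head of e)`. By nonnegativity of the weights, `S t` contains no circulation, so it
has exactly `p` arcs entering `t` and none entering `s`.

It remains to see `S t ⊆ H`, that is, every arc of `S t` entering `v` lies in `S v`. The symmetric
difference `S v ∆ S t`, with the arcs of `S v` reversed, is a flow of value `p` from `v` to `t`. If
one of its forward arcs enters `v`, it contains a circulation; exchanging `S v` and `S t` along it
gives two other flows with the same values and the same total weight, against strict minimality of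
both.
-/

section Divergence

variable {α : Type*}

/-- The divergence (outflow minus inflow, as a function of the vertex) of a unit of flow along the
arc `e`. It lives in `V →₀ ℤ` so that flow conservation becomes a single equation in an abelian
group. -/
noncomputable def arcDivergence (e : V × V) : V →₀ ℤ :=
  Finsupp.single e.1 1 - Finsupp.single e.2 1

lemma arcDivergence_swap (e : V × V) : arcDivergence e.swap = -arcDivergence e :=
  (neg_sub _ _).symm

lemma arcDivergence_apply (e : V × V) (x : V) :
    arcDivergence e x = (if e.1 = x then 1 else 0) - (if e.2 = x then 1 else 0) := by
  simp [arcDivergence, Finsupp.single_apply]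

lemma arcDivergence_apply_nonpos {e : V × V} {x : V} (hx : x ≠ e.1) : arcDivergence e x ≤ 0 := by
  rw [arcDivergence_apply, if_neg hx.symm]
  split_ifs <;> simp

lemma linearCombination_arcDivergence (φ : V → ℤ) (e : V × V) :
    Finsupp.linearCombination ℤ φ (arcDivergence e) = φ e.1 - φ e.2 := by
  simp [arcDivergence]

lemma exists_entering_of_divergence_nonpos {D : Finset α} {a : α → V × V} {x : V}
    (hout : ∃ i ∈ D, (a i).1 = x) (hx : (∑ i ∈ D, arcDivergence (a i)) x ≤ 0) :
    ∃ i ∈ D, (a i).2 = x := by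
  by_contra! hin
  have hterm : ∀ i ∈ D, arcDivergence (a i) x = if (a i).1 = x then 1 else 0 := fun i hi => by
    rw [arcDivergence_apply, if_neg (hin i hi), sub_zero]
  obtain ⟨i, hi, hix⟩ := hout
  rw [Finsupp.finsetSum_apply, Finset.sum_congr rfl hterm] at hx
  refine hx.not_gt (Finset.sum_pos' (fun j _ => ?_) ⟨i, hi, by simp [hix]⟩)
  split_ifs <;> simp

lemma exists_subset_image_eq_self [DecidableEq α] (g : α → α) {A : Finset α} (hA : A.Nonempty)
    (hg : ∀ x ∈ A, g x ∈ A) : ∃ O ⊆ A, O.Nonempty ∧ O.image g = O := by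
  induction A using Finset.strongInduction with
  | H A ih =>
    have hsub : A.image g ⊆ A := Finset.image_subset_iff.2 hg
    by_cases himage : A.image g = A
    · exact ⟨A, subset_rfl, hA, himage⟩
    · obtain ⟨O, hO, hne, hfix⟩ := ih _ (hsub.ssubset_of_ne himage) (hA.image g)
        fun x hx => Finset.mem_image_of_mem g (hsub hx)
      exact ⟨O, hO.trans hsub, hne, hfix⟩

lemma exists_circulation_of_forall_predecessor {D : Finset α} {a : α → V × V} (hD : D.Nonempty)
    (hpred : ∀ i ∈ D, ∃ j ∈ D, (a j).2 = (a i).1) :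
    ∃ C ⊆ D, C.Nonempty ∧ ∑ i ∈ C, arcDivergence (a i) = 0 := by
  choose! g hgD hg using hpred
  obtain ⟨C, hCD, hC, himage⟩ := exists_subset_image_eq_self g hD hgD
  have hinj : Set.InjOn g C := Finset.card_image_iff.1 (by rw [himage])
  refine ⟨C, hCD, hC, ?_⟩
  calc ∑ i ∈ C, arcDivergence (a i)
      = ∑ i ∈ C, Finsupp.single (a i).1 1 - ∑ i ∈ C, Finsupp.single (a i).2 1 :=
        Finset.sum_sub_distrib _ _
    _ = ∑ i ∈ C, Finsupp.single (a (g i)).2 1 - ∑ i ∈ C, Finsupp.single (a i).2 1 := by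
        congr 1
        exact Finset.sum_congr rfl fun i hi => by rw [hg i (hCD hi)]
    _ = 0 := by
        rw [← Finset.sum_image (f := fun i => Finsupp.single (a i).2 (1 : ℤ)) hinj, himage,
          sub_self]

lemma exists_circulation_of_entering {D : Finset α} {a : α → V × V} {v : V}
    (hv : ∃ i ∈ D, (a i).2 = v) (hdiv : ∀ x, x ≠ v → (∑ i ∈ D, arcDivergence (a i)) x ≤ 0) :
    ∃ C ⊆ D, C.Nonempty ∧ ∑ i ∈ C, arcDivergence (a i) = 0 := by
  refine exists_circulation_of_forall_predecessor (hv.imp fun _ => And.left) fun i hi => ?_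
  by_cases hiv : (a i).1 = v
  · rwa [hiv]
  · exact exists_entering_of_divergence_nonpos ⟨i, hi, rfl⟩ (hdiv _ hiv)

end Divergence

section Exchange

open scoped symmDiff

variable {S T C : Finset (V × V)}

lemma sum_symmDiff_add_sum_inter {α M : Type*} [DecidableEq α] [AddCommMonoid M] (f : α → M)
    (S C : Finset α) :
    ∑ e ∈ S ∆ C, f e + ∑ e ∈ C ∩ S, f e = ∑ e ∈ S, f e + ∑ e ∈ C \ S, f e := by
  rw [symmDiff_def, Finset.sup_eq_union, Finset.sum_union disjoint_sdiff_sdiff, add_right_comm,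
    Finset.inter_comm, add_comm (∑ e ∈ S \ C, f e), Finset.sum_inter_add_sum_sdiff]

lemma sum_symmDiff_add_sum_symmDiff {α M : Type*} [DecidableEq α] [AddCommMonoid M] (f : α → M)
    {S T C : Finset α} (hC : C ⊆ S ∆ T) :
    ∑ e ∈ S ∆ C, f e + ∑ e ∈ T ∆ C, f e = ∑ e ∈ S, f e + ∑ e ∈ T, f e := by
  have hunion : S ∆ C ∪ T ∆ C = S ∪ T := by grind [Finset.mem_symmDiff]
  have hinter : S ∆ C ∩ T ∆ C = S ∩ T := by grind [Finset.mem_symmDiff]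
  rw [← Finset.sum_union_inter, hunion, hinter, Finset.sum_union_inter]

/-- The residual arc of `e` with respect to the flow `S`: arcs used by `S` are reversed, all others
keep their direction. Residual arcs stay indexed by `e`, so that the reversal of an arc of `S` is
never confused with an antiparallel arc of the graph, as would happen in `resEdges`. -/
noncomputable def residualArc (S : Finset (V × V)) (e : V × V) : V × V :=
  if e ∈ S then e.swap else e

lemma sum_arcDivergence_symmDiff (S C : Finset (V × V)) :
    ∑ e ∈ S ∆ C, arcDivergence e =
      ∑ e ∈ S, arcDivergence e + ∑ e ∈ C, arcDivergence (residualArc S e) := by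
  have hinter : ∑ e ∈ C ∩ S, arcDivergence (residualArc S e) = -∑ e ∈ C ∩ S, arcDivergence e := by
    rw [← Finset.sum_neg_distrib]
    refine Finset.sum_congr rfl fun e he => ?_
    rw [residualArc, if_pos (Finset.mem_of_mem_inter_right he), arcDivergence_swap]
  have hdiff : ∑ e ∈ C \ S, arcDivergence (residualArc S e) = ∑ e ∈ C \ S, arcDivergence e :=
    Finset.sum_congr rfl fun e he => by rw [residualArc, if_neg (Finset.mem_sdiff.1 he).2]
  rw [← Finset.sum_inter_add_sum_sdiff C S, hinter, hdiff, ← sub_eq_of_eq_add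
    (sum_symmDiff_add_sum_inter arcDivergence S C).symm]
  abel

lemma sum_arcDivergence_residualArc_neg (hC : C ⊆ S ∆ T) :
    ∑ e ∈ C, arcDivergence (residualArc T e) = -∑ e ∈ C, arcDivergence (residualArc S e) := by
  rw [← Finset.sum_neg_distrib]
  refine Finset.sum_congr rfl fun e he => ?_
  rcases Finset.mem_symmDiff.1 (hC he) with ⟨hS, hT⟩ | ⟨hT, hS⟩ <;>
    simp [residualArc, hS, hT, arcDivergence_swap]

end Exchange

section Flow

open scoped symmDiff

variable {E : Set (V × V)} {s t v : V} {p : ℕ} {S T C : Finset (V × V)}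

/-- `S` is the arc set of an integral unit-capacity flow of value `p` from `s` to `t` in the graph
with edge set `E`. -/
def IsFlow (E : Set (V × V)) (s t : V) (p : ℕ) (S : Finset (V × V)) : Prop :=
  ↑S ⊆ E ∧ ∑ e ∈ S, arcDivergence e = p • arcDivergence (s, t)

lemma IsFlow.symmDiff (hS : IsFlow E s t p S) (hC : (C : Set (V × V)) ⊆ E)
    (hcirc : ∑ e ∈ C, arcDivergence (residualArc S e) = 0) : IsFlow E s t p (S ∆ C) := by
  refine ⟨fun e he => ?_, by rw [sum_arcDivergence_symmDiff, hcirc, add_zero, hS.2]⟩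
  rcases Finset.mem_symmDiff.1 he with ⟨he, -⟩ | ⟨he, -⟩
  exacts [hS.1 he, hC he]

lemma IsFlow.sum_potential (hS : IsFlow E s t p S) (φ : V → ℤ) :
    ∑ e ∈ S, (φ e.1 - φ e.2) = p * (φ s - φ t) := by
  simpa [linearCombination_arcDivergence] using congrArg (Finsupp.linearCombination ℤ φ) hS.2

lemma IsFlow.sum_arcDivergence_residualArc_symmDiff (hS : IsFlow E s v p S)
    (hT : IsFlow E s t p T) :
    ∑ e ∈ S ∆ T, arcDivergence (residualArc S e) = p • arcDivergence (v, t) := by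
  have h := sum_arcDivergence_symmDiff S (S ∆ T)
  rw [symmDiff_symmDiff_cancel_left, hS.2, hT.2] at h
  rw [← sub_eq_of_eq_add' h, ← smul_sub]
  simp [arcDivergence]

/-- `S` is the unique minimum-weight flow of value `p` from `s` to `t`. Weights lie in an ordered
monoid so as to allow lexicographically perturbed costs. -/
def IsUniqueMinFlow {M : Type*} [AddCommMonoid M] [LT M] (E : Set (V × V)) (w : V × V → M)
    (s t : V) (p : ℕ) (S : Finset (V × V)) : Prop :=
  IsFlow E s t p S ∧ ∀ T, IsFlow E s t p T → T ≠ S → ∑ e ∈ S, w e < ∑ e ∈ T, w e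

lemma exists_isUniqueMinFlow {M : Type*} [AddCommMonoid M] [LinearOrder M] [Finite V]
    {w : V × V → M} (hw : Function.Injective fun S : Finset (V × V) => ∑ e ∈ S, w e)
    (hflow : ∃ S, IsFlow E s t p S) : ∃ S, IsUniqueMinFlow E w s t p S := by
  obtain ⟨S, hS, hmin⟩ := Set.exists_min_image {S | IsFlow E s t p S} (fun S => ∑ e ∈ S, w e)
    (Set.toFinite _) hflow
  exact ⟨S, hS, fun T hT hne => (hmin T hT).lt_of_ne fun heq => hne (hw heq).symm⟩

variable {M : Type*} [AddCommMonoid M] [PartialOrder M] {w : V × V → M}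

lemma IsUniqueMinFlow.sum_le (hS : IsUniqueMinFlow E w s t p S) (hT : IsFlow E s t p T) :
    ∑ e ∈ S, w e ≤ ∑ e ∈ T, w e := by
  rcases eq_or_ne T S with rfl | hne
  exacts [le_rfl, (hS.2 T hT hne).le]

lemma IsUniqueMinFlow.eq_empty_of_residual_circulation [IsOrderedCancelAddMonoid M] {s' : V} {q : ℕ}
    (hS : IsUniqueMinFlow E w s v p S) (hT : IsUniqueMinFlow E w s' t q T) (hC : C ⊆ S ∆ T)
    (hcirc : ∑ e ∈ C, arcDivergence (residualArc S e) = 0) : C = ∅ := by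
  by_contra hne
  have hCE : (C : Set (V × V)) ⊆ E := fun e he => by
    rcases Finset.mem_symmDiff.1 (hC he) with ⟨he, -⟩ | ⟨he, -⟩
    exacts [hS.1.1 he, hT.1.1 he]
  have hcirc' : ∑ e ∈ C, arcDivergence (residualArc T e) = 0 := by
    rw [sum_arcDivergence_residualArc_neg hC, hcirc, neg_zero]
  have hlt := add_lt_add (hS.2 _ (hS.1.symmDiff hCE hcirc) (by simpa using hne))
    (hT.2 _ (hT.1.symmDiff hCE hcirc') (by simpa using hne))
  exact hlt.ne (sum_symmDiff_add_sum_symmDiff w hC).symm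

lemma IsUniqueMinFlow.mem_of_entering [IsOrderedCancelAddMonoid M]
    (hS : IsUniqueMinFlow E w s v p S) (hT : IsUniqueMinFlow E w s t p T) {e : V × V}
    (he : e ∈ T) (hev : e.2 = v) : e ∈ S := by
  by_contra heS
  obtain ⟨C, hC, hne, hcirc⟩ : ∃ C ⊆ S ∆ T, C.Nonempty ∧
      ∑ f ∈ C, arcDivergence (residualArc S f) = 0 := by
    refine exists_circulation_of_entering (v := v)
      ⟨e, Finset.mem_symmDiff.2 (.inr ⟨he, heS⟩), by rw [residualArc, if_neg heS, hev]⟩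
      fun x hx => ?_
    rw [hS.1.sum_arcDivergence_residualArc_symmDiff hT.1]
    exact nsmul_nonpos (arcDivergence_apply_nonpos hx) p
  exact hne.ne_empty (hS.eq_empty_of_residual_circulation hT hC hcirc)

lemma IsUniqueMinFlow.eq_empty_of_circulation [IsOrderedAddMonoid M] (hw : ∀ e ∈ E, 0 ≤ w e)
    (hS : IsUniqueMinFlow E w s t p S) (hC : C ⊆ S) (hcirc : ∑ e ∈ C, arcDivergence e = 0) :
    C = ∅ := by
  by_contra hne
  have hflow : IsFlow E s t p (S \ C) :=
    ⟨fun e he => hS.1.1 (Finset.sdiff_subset he), by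
      rw [← hS.1.2, ← Finset.sum_sdiff hC, hcirc, add_zero]⟩
  have hle : ∑ e ∈ S \ C, w e ≤ ∑ e ∈ S, w e :=
    Finset.sum_le_sum_of_subset_of_nonneg Finset.sdiff_subset fun e he _ => hw e (hS.1.1 he)
  refine (hS.2 _ hflow fun heq => hne ?_).not_ge hle
  exact (Finset.sdiff_eq_self_iff_disjoint.1 heq).symm.eq_bot_of_le hC

lemma IsUniqueMinFlow.snd_ne_source [IsOrderedAddMonoid M] (hw : ∀ e ∈ E, 0 ≤ w e)
    (hS : IsUniqueMinFlow E w s t p S) {e : V × V} (he : e ∈ S) : e.2 ≠ s := by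
  intro hes
  obtain ⟨C, hC, hne, hcirc⟩ := exists_circulation_of_entering (a := id) ⟨e, he, hes⟩
    fun x hx => by
      simp only [id, hS.1.2]
      exact nsmul_nonpos (arcDivergence_apply_nonpos hx) p
  exact hne.ne_empty (hS.eq_empty_of_circulation hw hC hcirc)

lemma IsUniqueMinFlow.fst_ne_target [IsOrderedAddMonoid M] (hw : ∀ e ∈ E, 0 ≤ w e)
    (hS : IsUniqueMinFlow E w s t p S) {e : V × V} (he : e ∈ S) : e.1 ≠ t := by
  intro het
  obtain ⟨C, hC, hne, hcirc⟩ := exists_circulation_of_entering (a := Prod.swap) ⟨e, he, het⟩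
    fun x hx => by
      simp only [arcDivergence_swap, Finset.sum_neg_distrib, hS.1.2]
      rw [← smul_neg, ← arcDivergence_swap]
      exact nsmul_nonpos (arcDivergence_apply_nonpos hx) p
  simp only [arcDivergence_swap, Finset.sum_neg_distrib, neg_eq_zero] at hcirc
  exact hne.ne_empty (hS.eq_empty_of_circulation hw hC hcirc)

lemma IsUniqueMinFlow.card_entering [IsOrderedAddMonoid M] (hw : ∀ e ∈ E, 0 ≤ w e)
    (hS : IsUniqueMinFlow E w s t p S) (hts : t ≠ s) : (S.filter fun e => e.2 = t).card = p := by
  have hpot := hS.1.sum_potential fun x => if x = t then -1 else 0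
  have hterm : ∀ e ∈ S, ((if e.1 = t then -1 else 0) - (if e.2 = t then -1 else 0) : ℤ) =
      if e.2 = t then 1 else 0 := fun e he => by
    rw [if_neg (hS.fst_ne_target hw he)]
    split_ifs <;> simp
  rw [Finset.sum_congr rfl hterm, Finset.sum_boole, if_neg hts.symm, if_pos rfl] at hpot
  simpa using hpot

end Flow

section Paths

variable {E F : Set (V × V)} {s t u v x y : V} {p k : ℕ} {L : List (V × V)} {e : V × V}
  {S : Finset (V × V)}

lemma isPath_iff : IsPath E u v L ↔ L.Nodup ∧ (∀ e ∈ L, e ∈ E) ∧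
    L.IsChain (fun e f => e.2 = f.1) ∧ (∀ e ∈ L.head?, e.1 = u) ∧ (∀ e ∈ L.getLast?, e.2 = v) ∧
    (L = [] → u = v) :=
  Iff.rfl

lemma isPath_nil : IsPath E u v [] ↔ u = v := by
  simp [isPath_iff]

lemma isPath_cons :
    IsPath E u v (e :: L) ↔ e ∈ E ∧ e.1 = u ∧ e ∉ L ∧ IsPath E e.2 v L := by
  cases L <;> grind [isPath_iff]

lemma IsPath.mono (h : IsPath E u v L) (hEF : E ⊆ F) : IsPath F u v L :=
  ⟨h.1, fun e he => hEF (h.2.1 e he), h.2.2⟩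

lemma IsPath.sum_arcDivergence (h : IsPath E u v L) :
    ∑ e ∈ L.toFinset, arcDivergence e = arcDivergence (u, v) := by
  rw [List.sum_toFinset _ h.1]
  induction L generalizing u with
  | nil => simp [arcDivergence, isPath_nil.1 h]
  | cons e L ih =>
    obtain ⟨-, rfl, -, hL⟩ := isPath_cons.1 h
    rw [List.map_cons, List.sum_cons, ih hL]
    simp [arcDivergence]

lemma IsPath.of_append_cons {L₁ L₂ : List (V × V)} (h : IsPath E u v (L₁ ++ e :: L₂)) :
    IsPath E e.1 v (e :: L₂) := by
  induction L₁ generalizing u with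
  | nil => rwa [(isPath_cons.1 h).2.1]
  | cons f L₁ ih => exact ih (isPath_cons.1 h).2.2.2

lemma exists_isPath_of_reflTransGen (h : Relation.ReflTransGen (fun x y => (x, y) ∈ E) u v) :
    ∃ L, IsPath E u v L := by
  induction h using Relation.ReflTransGen.head_induction_on with
  | refl => exact ⟨[], isPath_nil.2 rfl⟩
  | @head x y hxy _ ih =>
    obtain ⟨L, hL⟩ := ih
    by_cases hmem : (x, y) ∈ L
    · obtain ⟨L₁, L₂, rfl⟩ := List.append_of_mem hmem
      exact ⟨_, hL.of_append_cons⟩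
    · exact ⟨(x, y) :: L, isPath_cons.2 ⟨hxy, rfl, hmem, hL⟩⟩

lemma IsFlow.exists_isPath (hS : IsFlow E s t (p + 1) S) :
    ∃ L, IsPath (S : Set (V × V)) s t L := by
  set Reach := Relation.ReflTransGen fun x y => (x, y) ∈ S
  refine exists_isPath_of_reflTransGen (?_ : Reach s t)
  by_contra ht
  have hpot := hS.sum_potential fun x => if Reach s x then 1 else 0
  have hnonpos : ∀ e ∈ S,
      ((if Reach s e.1 then 1 else 0) - (if Reach s e.2 then 1 else 0) : ℤ) ≤ 0 := fun e he => by
    by_cases hreach : Reach s e.1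
    · rw [if_pos hreach, if_pos (hreach.tail he), sub_self]
    · rw [if_neg hreach]
      split_ifs <;> simp
  have hle := Finset.sum_nonpos hnonpos
  rw [hpot, if_pos Relation.ReflTransGen.refl, if_neg ht] at hle
  push_cast at hle
  omega

lemma IsFlow.sdiff_path (hS : IsFlow E s t (p + 1) S) (hL : IsPath (S : Set (V × V)) s t L) :
    IsFlow E s t p (S \ L.toFinset) := by
  have hLS : L.toFinset ⊆ S := fun e he => hL.2.1 e (List.mem_toFinset.1 he)
  refine ⟨fun e he => hS.1 (Finset.sdiff_subset he), ?_⟩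
  rw [Finset.sum_sdiff_eq_sub hLS, hS.2, hL.sum_arcDivergence, succ_nsmul, add_sub_cancel_right]

lemma IsDisjointFamily.mono {P : Fin k → List (V × V)} (h : IsDisjointFamily E u v P)
    (hEF : E ⊆ F) : IsDisjointFamily F u v P :=
  ⟨fun j => (h.1 j).mono hEF, h.2⟩

lemma IsDisjointFamily.cons {P : Fin k → List (V × V)} (hP : IsDisjointFamily E u v P)
    (hL : IsPath E u v L) (hdisj : ∀ j, ∀ e ∈ P j, e ∉ L) :
    IsDisjointFamily E u v (Fin.cons L P : Fin (k + 1) → List (V × V)) := by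
  refine ⟨Fin.cases hL hP.1, Fin.cases (Fin.cases (fun h => (h rfl).elim) ?_)
    fun i => Fin.cases (fun _ => hdisj i) fun j hij => ?_⟩
  · exact fun j _ e he he' => hdisj j e he' he
  · exact hP.2 i j fun h => hij (by rw [h])

lemma IsFlow.exists_isDisjointFamily (hS : IsFlow E s t p S) :
    ∃ P : Fin p → List (V × V), IsDisjointFamily (S : Set (V × V)) s t P := by
  induction p generalizing S with
  | zero => exact ⟨Fin.elim0, fun j => j.elim0, fun j => j.elim0⟩
  | succ p ih =>
    obtain ⟨L, hL⟩ := hS.exists_isPath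
    obtain ⟨P, hP⟩ := ih (hS.sdiff_path hL)
    refine ⟨Fin.cons L P, (hP.mono (by simp)).cons hL fun j e he => ?_⟩
    simpa using ((Finset.mem_sdiff.1 ((hP.1 j).2.1 e he)).2)

/-- The set of edges used by a family of paths, which is a flow when the paths are disjoint. -/
noncomputable def familyEdges (P : Fin k → List (V × V)) : Finset (V × V) :=
  Finset.univ.biUnion fun j => (P j).toFinset

lemma IsDisjointFamily.familyEdges_subset {P : Fin k → List (V × V)}
    (h : IsDisjointFamily E u v P) : (familyEdges P : Set (V × V)) ⊆ E := by
  intro e he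
  obtain ⟨j, -, hj⟩ := Finset.mem_biUnion.1 he
  exact (h.1 j).2.1 e (List.mem_toFinset.1 hj)

lemma IsDisjointFamily.sum_familyEdges {M : Type*} [AddCommMonoid M] {P : Fin k → List (V × V)}
    (h : IsDisjointFamily E u v P) (f : V × V → M) :
    ∑ e ∈ familyEdges P, f e = ∑ j, ∑ e ∈ (P j).toFinset, f e := by
  refine Finset.sum_biUnion fun i _ j _ hij => Finset.disjoint_left.2 fun e hi hj => ?_
  exact h.2 i j hij e (List.mem_toFinset.1 hi) (List.mem_toFinset.1 hj)

lemma IsDisjointFamily.isFlow {P : Fin k → List (V × V)} (h : IsDisjointFamily E u v P) :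
    IsFlow E u v k (familyEdges P) := by
  refine ⟨h.familyEdges_subset, ?_⟩
  rw [h.sum_familyEdges, Finset.sum_congr rfl fun j _ => (h.1 j).sum_arcDivergence,
    Finset.sum_const, Finset.card_fin]

lemma IsDisjointFamily.famCost_eq {P : Fin k → List (V × V)} (h : IsDisjointFamily E u v P)
    (c : V × V → ℝ) : famCost c P = ∑ e ∈ familyEdges P, c e := by
  rw [h.sum_familyEdges]
  exact Finset.sum_congr rfl fun j _ => (List.sum_toFinset c (h.1 j).1).symm

lemma IsFlow.exists_isMinFamily {c : V × V → ℝ} (hc : ∀ e ∈ E, 0 ≤ c e) (hS : IsFlow E s t p S)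
    (hmin : ∀ T, IsFlow E s t p T → ∑ e ∈ S, c e ≤ ∑ e ∈ T, c e) :
    ∃ P : Fin p → List (V × V), IsMinFamily E c s t P ∧ ∀ j, ∀ e ∈ P j, e ∈ S := by
  obtain ⟨P, hP⟩ := hS.exists_isDisjointFamily
  refine ⟨P, ⟨hP.mono hS.1, fun Q hQ => ?_⟩, fun j => (hP.1 j).2.1⟩
  calc famCost c P = ∑ e ∈ familyEdges P, c e := hP.famCost_eq c
    _ ≤ ∑ e ∈ S, c e :=
      Finset.sum_le_sum_of_subset_of_nonneg hP.familyEdges_subset fun e he _ => hc e (hS.1 he)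
    _ ≤ ∑ e ∈ familyEdges Q, c e := hmin _ hQ.isFlow
    _ = famCost c Q := (hQ.famCost_eq c).symm

end Paths

section Perturbation

lemma exists_nat_weight_injective_sum (α : Type*) [Finite α] :
    ∃ N : α → ℕ, Function.Injective fun S : Finset α => ∑ e ∈ S, N e := by
  obtain ⟨n, ⟨f⟩⟩ := Finite.exists_equiv_fin α
  let g : α ↪ ℕ := f.toEmbedding.trans Fin.valEmbedding
  refine ⟨fun a => 2 ^ g a, fun S T h => ?_⟩
  apply Finset.map_injective g
  apply Finset.geomSum_injective le_rfl
  simpa using h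

lemma sum_toLex {α A B : Type*} [AddCommMonoid A] [AddCommMonoid B] (f : α → A) (g : α → B)
    (S : Finset α) :
    ∑ e ∈ S, toLex (f e, g e) = toLex (∑ e ∈ S, f e, ∑ e ∈ S, g e) :=
  congrArg toLex (prod_mk_sum S f g).symm

lemma exists_separating_lex_weight {α A : Type*} [Finite α] [AddCommMonoid A] [PartialOrder A]
    (c : α → A) :
    ∃ w : α → A ×ₗ ℕ, (∀ e, 0 ≤ c e → 0 ≤ w e) ∧
      (∀ S T : Finset α, ∑ e ∈ S, w e ≤ ∑ e ∈ T, w e → ∑ e ∈ S, c e ≤ ∑ e ∈ T, c e) ∧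
      Function.Injective fun S : Finset α => ∑ e ∈ S, w e := by
  obtain ⟨N, hN⟩ := exists_nat_weight_injective_sum α
  refine ⟨fun e => toLex (c e, N e), fun e he => ?_, fun S T h => ?_, fun S T h => hN ?_⟩
  · exact Prod.Lex.toLex_mono (show (0, 0) ≤ (c e, N e) from ⟨he, Nat.zero_le _⟩)
  · simpa only [sum_toLex, ofLex_toLex] using Prod.Lex.monotone_fst _ _ h
  · simp only [sum_toLex] at h
    exact congrArg Prod.snd (toLex.injective h)

end Perturbation

section Preserver

/-- The arcs `e` that the member of the family `S` indexed by the head of `e` uses: the preserver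
keeps, for each `t ≠ s`, the arcs of `S t` entering `t`. -/
def headSelectedArcs (s : V) (S : V → Finset (V × V)) : Set (V × V) :=
  {e | e.2 ≠ s ∧ e ∈ S e.2}

lemma headSelectedArcs_entering {s t : V} (S : V → Finset (V × V)) (hts : t ≠ s) :
    {e ∈ headSelectedArcs s S | e.2 = t} = ((S t).filter fun e => e.2 = t : Finset (V × V)) := by
  ext e
  simp only [headSelectedArcs, Set.mem_ofPred_eq, Finset.coe_filter]
  grind

lemma ncard_eq_mul_of_ncard_fiber {α β : Type*} [Finite α] [Fintype β] {H : Set α} {f : α → β}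
    {b : β} {p : ℕ} (hb : ∀ a ∈ H, f a ≠ b) (hfiber : ∀ y, y ≠ b → {a ∈ H | f a = y}.ncard = p) :
    H.ncard = p * (Fintype.card β - 1) := by
  lift H to Finset α using H.toFinite
  have hmaps : (H : Set α).MapsTo f (Finset.univ.erase b : Finset β) := fun a ha => by
    simpa using hb a ha
  have hcard : ∀ y ∈ Finset.univ.erase b, (H.filter fun a => f a = y).card = p := fun y hy => by
    rw [← hfiber y (Finset.ne_of_mem_erase hy), ← Set.ncard_coe_finset, Finset.coe_filter]
    rfl
  rw [Set.ncard_coe_finset, Finset.card_eq_sum_card_fiberwise hmaps, Finset.sum_congr rfl hcard,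
    Finset.sum_const, Finset.card_erase_of_mem (Finset.mem_univ b), Finset.card_univ, smul_eq_mul,
    mul_comm]

theorem exists_optimal_preserver_general [Fintype V]
    (E : Set (V × V)) (c : V × V → ℝ) (s : V)
    (hc : ∀ e ∈ E, 0 ≤ c e) (p : ℕ)
    (hconn : ∀ t, t ≠ s → ∃ P : Fin p → List (V × V), IsDisjointFamily E s t P) :
    ∃ H ⊆ E,
      (∀ e ∈ H, e.2 ≠ s) ∧
      (∀ t, t ≠ s → {e ∈ H | e.2 = t}.ncard = p) ∧
      H.ncard = p * (Fintype.card V - 1) ∧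
      ∀ t, t ≠ s → ∃ P : Fin p → List (V × V),
        IsMinFamily E c s t P ∧ ∀ j, ∀ e ∈ P j, e ∈ H := by
  obtain ⟨w, hw_nonneg, hw_refines, hw_inj⟩ := exists_separating_lex_weight c
  have hw : ∀ e ∈ E, 0 ≤ w e := fun e he => hw_nonneg e (hc e he)
  have hflow : ∀ t, t ≠ s → ∃ S, IsUniqueMinFlow E w s t p S := fun t ht =>
    exists_isUniqueMinFlow hw_inj ((hconn t ht).imp' familyEdges fun _ hP => hP.isFlow)
  choose! S hS using hflow
  have hfiber : ∀ t, t ≠ s → {e ∈ headSelectedArcs s S | e.2 = t}.ncard = p := fun t ht => by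
    rw [headSelectedArcs_entering S ht, Set.ncard_coe_finset, (hS t ht).card_entering hw ht]
  refine ⟨headSelectedArcs s S, fun e he => (hS _ he.1).1.1 he.2, fun e he => he.1, hfiber,
    ncard_eq_mul_of_ncard_fiber (fun e he => he.1) hfiber, fun t ht => ?_⟩
  obtain ⟨P, hP, hPS⟩ := (hS t ht).1.exists_isMinFamily hc fun T hT =>
    hw_refines _ _ ((hS t ht).sum_le hT)
  refine ⟨P, hP, fun j e he => ?_⟩
  have hes : e.2 ≠ s := (hS t ht).snd_ne_source hw (hPS j e he)
  exact ⟨hes, (hS _ hes).mem_of_entering (hS t ht) (hPS j e he) rfl⟩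

end Preserver

/-- If `G` is `p`-edge-outconnected from `s`, then there is a
single-source `p`-multipath preserver `H ⊆ E` with no edge entering `s`,
exactly `p` edges entering each `t ≠ s` (hence `|H| = p (n-1)`), containing,
for every `t ≠ s`, a family of `p` edge-disjoint paths from `s` to `t` of
minimum total cost in `G`. -/
theorem exists_optimal_preserver [Fintype V]
    (E : Set (V × V)) (c : V × V → ℝ) (s : V)
    (hirr : ∀ e ∈ E, e.1 ≠ e.2)
    (hanti : ∀ e ∈ E, (e.2, e.1) ∉ E)
    (hc : ∀ e ∈ E, 0 ≤ c e)
    (p : ℕ) (hp : 1 ≤ p)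
    (hconn : ∀ t, t ≠ s → ∃ P : Fin p → List (V × V), IsDisjointFamily E s t P) :
    ∃ H ⊆ E,
      (∀ e ∈ H, e.2 ≠ s) ∧
      (∀ t, t ≠ s → {e ∈ H | e.2 = t}.ncard = p) ∧
      H.ncard = p * (Fintype.card V - 1) ∧
      ∀ t, t ≠ s → ∃ P : Fin p → List (V × V),
        IsMinFamily E c s t P ∧ ∀ j, ∀ e ∈ P j, e ∈ H :=
  exists_optimal_preserver_general E c s hc p hconn

end MultipathPreserver
end

section
/- For every t ≠ s and every path π ∈ Π(s,t; G_{S^t}) with q = q(π): the last edge of the portion π[q:t] (the portion of π from q to t) belongs to E \ S^t and enters t, and every other edge of π[q:t] either belongs to H or is the reverse of an edge of S^t. -/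
open scoped Classical

namespace MultipathPreserver

variable {V : Type*}

/-! A simple path visits its endpoint `t` only at its end, so no edge of `S^t` leaves `t` and no
reversed edge of the residual network enters it: the last edge of a residual path to `t` lies in
`E \ S^t`. Every other edge after `q` lies outside `E \ H` by the choice of `q`, and an edge of the
residual network outside `E \ H` is in `H` or reverses an edge of `S^t`. -/

section Paths

variable {F : Set (V × V)} {u v : V} {e : V × V} {L : List (V × V)}

theorem IsPath.fst_eq_of_cons (h : IsPath F u v (e :: L)) : e.1 = u :=
  h.2.2.2.1 e rfl

theorem IsPath.tail (h : IsPath F u v (e :: L)) : IsPath F e.2 v L := by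
  obtain ⟨hnodup, hmem, hchain, -, hlast, -⟩ := h
  obtain ⟨hhead, hchain⟩ := List.isChain_cons.1 hchain
  refine ⟨hnodup.of_cons, fun f hf => hmem f (List.mem_cons_of_mem e hf), hchain,
    fun f hf => (hhead f hf).symm, fun f hf => hlast f (List.mem_getLast?_cons hf), ?_⟩
  rintro rfl
  exact hlast e rfl

theorem IsPath.target_mem (h : IsPath F u v L) : v ∈ u :: L.map Prod.snd := by
  induction L generalizing u with
  | nil => simp [h.2.2.2.2.2 rfl]
  | cons e L ih => exact List.mem_cons_of_mem u (ih h.tail)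

theorem IsPath.fst_ne_target (h : IsPath F u v L) (hsimple : (u :: L.map Prod.snd).Nodup) :
    ∀ e ∈ L, e.1 ≠ v := by
  induction L generalizing u with
  | nil => simp
  | cons e L ih =>
    obtain ⟨hu, hsimple⟩ := List.nodup_cons.1 hsimple
    refine List.forall_mem_cons.2 ⟨?_, ih h.tail hsimple⟩
    rintro rfl
    exact hu (h.fst_eq_of_cons ▸ h.tail.target_mem)

theorem InducesSimple.fst_ne_target {c : V × V → ℝ} {k : ℕ} {S : Set (V × V)}
    (h : InducesSimple F c u v k S) : ∀ e ∈ S, e.1 ≠ v := by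
  obtain ⟨P, ⟨⟨hpath, -⟩, -⟩, hsimple, rfl⟩ := h
  rintro e ⟨j, hj⟩
  exact (hpath j).fst_ne_target (hsimple j) e hj

end Paths

theorem drop_length_sub_findIdx_reverse {α : Type*} (p : α → Bool) (l : List α) :
    l.drop (l.length - l.reverse.findIdx p) = l.rtakeWhile fun a => !p a := by
  simp [List.rtakeWhile, List.takeWhile_eq_take_findIdx_not, List.take_reverse]

section Suffix

variable {E H S : Set (V × V)} {s t : V} {e : V × V} {L : List (V × V)}

theorem qPrefixLen_lt_length (hL : L ≠ []) : qPrefixLen E H L < L.length :=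
  calc
    qPrefixLen E H L ≤ L.dropLast.length := Nat.sub_le _ _
    _ < L.length := by simpa using List.length_pos_iff.2 hL

theorem dropLast_drop_qPrefixLen :
    (L.drop (qPrefixLen E H L)).dropLast =
      L.dropLast.rtakeWhile fun e => !decide (e ∈ E ∧ e ∉ H) := by
  rw [List.dropLast_drop_eq_drop_dropLast, qPrefixLen, drop_length_sub_findIdx_reverse]

theorem notMem_diff_of_mem_dropLast_drop_qPrefixLen
    (he : e ∈ (L.drop (qPrefixLen E H L)).dropLast) : e ∉ E \ H := by
  rw [dropLast_drop_qPrefixLen] at he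
  simpa [imp_iff_not_or] using List.mem_rtakeWhile_imp he

theorem mem_diff_of_mem_resEdges (hS : ∀ f ∈ S, f.1 ≠ e.2) (he : e ∈ resEdges E S) : e ∈ E \ S :=
  he.resolve_right fun hrev => hS (e.2, e.1) hrev rfl

theorem mem_or_swap_mem_of_mem_resEdges (he : e ∈ resEdges E S) (hEH : e ∉ E \ H) :
    e ∈ H ∨ (e.2, e.1) ∈ S :=
  he.imp_left fun hES => by_contra fun hH => hEH ⟨hES.1, hH⟩

theorem suffix_structure_general (hts : t ≠ s) (hS : ∀ e ∈ S, e.1 ≠ t)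
    (hL : IsPath (resEdges E S) s t L) :
    L.drop (qPrefixLen E H L) ≠ [] ∧
      (∀ e ∈ (L.drop (qPrefixLen E H L)).getLast?, e ∈ E ∧ e ∉ S ∧ e.2 = t) ∧
      ∀ e ∈ (L.drop (qPrefixLen E H L)).dropLast, e ∈ H ∨ (e.2, e.1) ∈ S := by
  obtain ⟨-, hmem, -, -, hlast, hnil⟩ := hL
  have hlen : qPrefixLen E H L < L.length := qPrefixLen_lt_length fun h => hts (hnil h).symm
  refine ⟨by simpa using hlen, fun e he => ?_, fun e he => ?_⟩
  · rw [List.getLast?_drop, if_neg hlen.not_ge] at he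
    obtain rfl : e.2 = t := hlast e he
    obtain ⟨heE, heS⟩ := mem_diff_of_mem_resEdges hS (hmem e (List.mem_of_getLast? he))
    exact ⟨heE, heS, rfl⟩
  · exact mem_or_swap_mem_of_mem_resEdges
      (hmem e (List.mem_of_mem_drop (List.mem_of_mem_dropLast he)))
      (notMem_diff_of_mem_dropLast_drop_qPrefixLen he)

end Suffix

/-- Lemma `suitable_subgraph`. For every `t ≠ s` and every
`π ∈ Π(s,t; G_{S^t})` with `q = q(π)`: the suffix `π[q:t]` is nonempty, its
last edge belongs to `E \ S^t` and enters `t`, and every other edge of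
`π[q:t]` either belongs to `H` or is the reverse of an edge of `S^t`. -/
theorem suffix_structure [Fintype V]
    (E : Set (V × V)) (c : V × V → ℝ) (s : V)
    (hirr : ∀ e ∈ E, e.1 ≠ e.2)
    (hanti : ∀ e ∈ E, (e.2, e.1) ∉ E)
    (hc : ∀ e ∈ E, 0 ≤ c e)
    (H : Set (V × V)) (hHE : H ⊆ E)
    (i : ℕ) (hi : 2 ≤ i)
    (Sv : V → Set (V × V)) (hSs : Sv s = ∅)
    (hSv : ∀ v, v ≠ s → Sv v ⊆ H ∧ InducesSimple E c s v (i - 1) (Sv v)) :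
    ∀ t, t ≠ s → ∀ L ∈ PiMin E H c (Sv t) s t,
      L.drop (qPrefixLen E H L) ≠ [] ∧
      (∀ e ∈ (L.drop (qPrefixLen E H L)).getLast?,
        e ∈ E ∧ e ∉ Sv t ∧ e.2 = t) ∧
      ∀ e ∈ (L.drop (qPrefixLen E H L)).dropLast,
        e ∈ H ∨ (e.2, e.1) ∈ Sv t := by
  intro t hts L hL
  exact suffix_structure_general hts (hSv t hts).2.fst_ne_target hL.1

end MultipathPreserver
end
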